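/- Let λ ∈ ℂ, t > 0 with φ_λ(t) ≠ 0, and let n ∈ ℕ. If R((c_λ(t)·I − S(t))^m) ∩ N(c_λ(t)·I − S(t)) = R((c_λ(t)·I − S(t))^n) ∩ N(c_λ(t)·I − S(t)) for all m ≥ n (i.e. dis(c_λ(t)·I − S(t)) ≤ n), then R((λ − A)^m) ∩ N(λ − A) = R((λ − A)^n) ∩ N(λ − A) for all m ≥ n; in particular dis(λ − A) ≤ n. -/

import Mathlib

/-!
Write `T = λ - A` with domain `D`, `B = c_λ(t) - S(t)` and `d = D_λ(t)`.

Since `A` has a resolvent, it is closed, so it may be moved inside integrals (`closed_integral`).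
Integrating `e^{λ(t-r)} S(r) x` by parts then shows that `d` maps `X` into `D` with `T d = B`
(`Dop_resolvent`), and `d T = T d` on `D` (`Dop_comm`). Consequently `R(B^m) ⊆ R(T^m)`, because
`B^m = T^m d^m`, and `B^n y = d^n (T^n y)` for `y ∈ D(T^n)`.

If moreover `T x = 0`, then `S(r) x = c_λ(r) x` for all `r ≥ 0`, whence
`d x = e^{λt} φ_λ(t) x` (`Dop_kernel`), a nonzero multiple of `x`. So for `x = T^n y` in the kernel
of `T`, the vector `B^n y = d^n x` is a nonzero multiple of `x`; thus `x ∈ R(B^n) ∩ N(B)`, and by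
hypothesis `x ∈ R(B^m) ⊆ R(T^m)`. The inclusion `R(T^m) ⊆ R(T^n)` is immediate.
-/

open MeasureTheory intervalIntegral Pointwise

noncomputable section

/-- `D_λ(t) x = ∫₀ᵗ e^{λ(t−r)} S(r) x dr`. -/
noncomputable def Dop {X : Type*} [NormedAddCommGroup X] [NormedSpace ℂ X]
    (S : ℝ → X →L[ℂ] X) (l : ℂ) (t : ℝ) (x : X) : X :=
  ∫ r in (0:ℝ)..t, Complex.exp (l * ((t - r : ℝ) : ℂ)) • S r x

/-- `c_λ(t) = ∫₀ᵗ e^{λ(t−s)} s^{α−1}/Γ(α) ds`. -/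
noncomputable def cConst (α : ℝ) (l : ℂ) (t : ℝ) : ℂ :=
  ∫ s in (0:ℝ)..t,
    Complex.exp (l * ((t - s : ℝ) : ℂ)) * ((s ^ (α - 1) : ℝ) : ℂ) / ((Real.Gamma α : ℝ) : ℂ)

/-- `L_λ(t) x = ∫₀ᵗ e^{−λs} D_λ(s) x ds`. -/
noncomputable def Lop {X : Type*} [NormedAddCommGroup X] [NormedSpace ℂ X]
    (S : ℝ → X →L[ℂ] X) (l : ℂ) (t : ℝ) (x : X) : X :=
  ∫ s in (0:ℝ)..t, Complex.exp (-l * ((s : ℝ) : ℂ)) • Dop S l s x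

/-- `φ_λ(t) = ∫₀ᵗ ∫₀^τ e^{−λr} r^{α−1}/Γ(α) dr dτ`. -/
noncomputable def phiConst (α : ℝ) (l : ℂ) (t : ℝ) : ℂ :=
  ∫ τ in (0:ℝ)..t, ∫ r in (0:ℝ)..τ,
    Complex.exp (-l * ((r : ℝ) : ℂ)) * ((r ^ (α - 1) : ℝ) : ℂ) / ((Real.Gamma α : ℝ) : ℂ)

/-- Iterated domain `D(A^n)` of the (possibly unbounded) operator given by the map `f = λ − A`
with domain `D`: `D^0 = X`, `D^{n+1} = {x ∈ D | f x ∈ D^n}`. -/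
def iterDom {X : Type*} (D : Set X) (f : X → X) : ℕ → Set X
  | 0 => Set.univ
  | n + 1 => {x | x ∈ D ∧ f x ∈ iterDom D f n}

/-- The bounded operator `c_λ(t)·I − S(t)`. -/
noncomputable def cSop {X : Type*} [NormedAddCommGroup X] [NormedSpace ℂ X]
    (S : ℝ → X →L[ℂ] X) (α : ℝ) (l : ℂ) (t : ℝ) : X →L[ℂ] X :=
  cConst α l t • ContinuousLinearMap.id ℂ X - S t

/-- `D_{λ,n}(t) = Σ_{i=1}^n binom(n,i)·(φ_λ(t))^{n−i}·e^{−iλt}·(−D_λ(t))^{i−1}`. -/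
noncomputable def Dln {X : Type*} [NormedAddCommGroup X] [NormedSpace ℂ X]
    (S : ℝ → X →L[ℂ] X) (α : ℝ) (l : ℂ) (t : ℝ) (n : ℕ) (x : X) : X :=
  ∑ i ∈ Finset.Icc 1 n,
    ((n.choose i : ℂ) * (phiConst α l t) ^ (n - i) * Complex.exp (-(i : ℂ) * l * (t : ℂ))) •
      ((fun y => - Dop S l t y)^[i - 1] x)

/-! ### Integration against the exponential kernel -/

/-- Integration by parts against `r ↦ e^{λ(t-r)}` for a function vanishing at `0`. -/
lemma exp_ibp {E : Type*} [NormedAddCommGroup E] [NormedSpace ℂ E] [CompleteSpace E]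
    (l : ℂ) {t : ℝ} (ht : 0 ≤ t) (f f' : ℝ → E) (hf : ContinuousOn f (Set.Icc 0 t))
    (hd : ∀ r ∈ Set.Ioo 0 t, HasDerivAt f (f' r) r) (hf' : IntervalIntegrable f' volume 0 t)
    (h0 : f 0 = 0) :
    ∫ r in (0:ℝ)..t, Complex.exp (l * ((t - r : ℝ) : ℂ)) • f' r =
      f t + l • ∫ r in (0:ℝ)..t, Complex.exp (l * ((t - r : ℝ) : ℂ)) • f r := by
  have hec : Continuous fun r : ℝ => Complex.exp (l * ((t - r : ℝ) : ℂ)) := by fun_prop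
  have hed : ∀ r : ℝ, HasDerivAt (fun r : ℝ => Complex.exp (l * ((t - r : ℝ) : ℂ)))
      (-l * Complex.exp (l * ((t - r : ℝ) : ℂ))) r := by
    intro r
    have h1 : HasDerivAt (fun r : ℝ => ((t - r : ℝ) : ℂ)) (((-1 : ℝ)) : ℂ) r :=
      ((hasDerivAt_id r).const_sub t).ofReal_comp
    have h2 := (h1.const_mul l).cexp
    convert h2 using 1
    push_cast; ring
  have hI1 : IntervalIntegrable
      (fun r => Complex.exp (l * ((t - r : ℝ) : ℂ)) • f' r) volume 0 t :=
    hf'.continuousOn_smul hec.continuousOn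
  have hI2 : IntervalIntegrable
      (fun r => Complex.exp (l * ((t - r : ℝ) : ℂ)) • f r) volume 0 t := by
    apply ContinuousOn.intervalIntegrable
    rw [Set.uIcc_of_le ht]
    exact hec.continuousOn.smul hf
  have hI3 : IntervalIntegrable
      (fun r => l • Complex.exp (l * ((t - r : ℝ) : ℂ)) • f r) volume 0 t := hI2.smul l
  have key := integral_eq_sub_of_hasDerivAt_of_le (a := 0) (b := t) ht
    (f := fun r => Complex.exp (l * ((t - r : ℝ) : ℂ)) • f r)
    (f' := fun r => Complex.exp (l * ((t - r : ℝ) : ℂ)) • f' r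
      - l • Complex.exp (l * ((t - r : ℝ) : ℂ)) • f r)
    (hec.continuousOn.smul hf)
    (fun r hr => by
      have := (hed r).smul (hd r hr)
      rw [neg_mul, neg_smul, mul_smul, ← sub_eq_add_neg] at this
      exact this)
    (hI1.sub hI3)
  rw [intervalIntegral.integral_sub hI1 hI3, intervalIntegral.integral_smul] at key
  simp only [sub_self, h0, smul_zero, sub_zero, Complex.ofReal_zero, mul_zero, Complex.exp_zero,
    one_smul] at key
  exact sub_eq_iff_eq_add.mp key

/-- The antiderivative `r^α / Γ(α+1)` of `r^{α-1} / Γ(α)` turns `c_λ(t)` into the scalar that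
appears in `(λ - A) D_λ(t)`. -/
lemma cConst_eq {α : ℝ} (hα : 0 < α) (l : ℂ) {t : ℝ} (ht : 0 ≤ t) :
    cConst α l t = ((t ^ α : ℝ) : ℂ) / ((Real.Gamma (α + 1) : ℝ) : ℂ) +
      l * ∫ r in (0:ℝ)..t, Complex.exp (l * ((t - r : ℝ) : ℂ)) *
        (((r ^ α : ℝ) : ℂ) / ((Real.Gamma (α + 1) : ℝ) : ℂ)) := by
  have hG : Real.Gamma (α + 1) = α * Real.Gamma α := Real.Gamma_add_one hα.ne'
  have hGne : Real.Gamma α ≠ 0 := (Real.Gamma_pos_of_pos hα).ne'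
  have := exp_ibp l ht (fun r : ℝ => ((r ^ α : ℝ) : ℂ) / ((Real.Gamma (α + 1) : ℝ) : ℂ))
    (fun r : ℝ => ((r ^ (α - 1) : ℝ) : ℂ) / ((Real.Gamma α : ℝ) : ℂ))
    ((Complex.continuous_ofReal.comp (Real.continuous_rpow_const hα.le)).div_const _).continuousOn
    (fun r hr => by
      have h := ((Real.hasDerivAt_rpow_const (p := α) (Or.inl hr.1.ne')).ofReal_comp).div_const
        ((Real.Gamma (α + 1) : ℝ) : ℂ)
      have h1 : (α : ℂ) ≠ 0 := by exact_mod_cast hα.ne'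
      have h2 : ((Real.Gamma α : ℝ) : ℂ) ≠ 0 := by exact_mod_cast hGne
      have h3 : ((α * r ^ (α - 1) : ℝ) : ℂ) / ((Real.Gamma (α + 1) : ℝ) : ℂ) =
          ((r ^ (α - 1) : ℝ) : ℂ) / ((Real.Gamma α : ℝ) : ℂ) := by
        rw [hG, Complex.ofReal_mul, Complex.ofReal_mul]
        field_simp
      rw [h3] at h
      exact h)
    (by
      have h : IntervalIntegrable (fun r : ℝ => r ^ (α - 1)) volume 0 t :=
        intervalIntegral.intervalIntegrable_rpow' (by linarith)
      have h' : IntervalIntegrable (fun r : ℝ => ((r ^ (α - 1) : ℝ) : ℂ)) volume 0 t :=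
        ⟨h.1.ofReal, h.2.ofReal⟩
      exact h'.div_const _)
    (by simp [Real.zero_rpow hα.ne'])
  simp only [smul_eq_mul] at this
  rw [← this, cConst]
  simp only [mul_div_assoc]

lemma cConst_eq_exp_mul (α : ℝ) (l : ℂ) (t : ℝ) :
    cConst α l t = Complex.exp (l * (t : ℂ)) * ∫ r in (0:ℝ)..t,
      Complex.exp (-l * ((r : ℝ) : ℂ)) * ((r ^ (α - 1) : ℝ) : ℂ) / ((Real.Gamma α : ℝ) : ℂ) := by
  rw [cConst, ← intervalIntegral.integral_const_mul]
  congr 1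
  ext r
  have : l * ((t - r : ℝ) : ℂ) = l * t + -l * r := by push_cast; ring
  rw [this, Complex.exp_add]
  ring

/-! ### The operator `D_λ(t)` and its interplay with `A` -/

section Operator

variable {X : Type*} [NormedAddCommGroup X] [NormedSpace ℂ X]

/-- An operator with a bounded resolvent is closed, hence commutes with integration. -/
lemma closed_integral [CompleteSpace X] (D : Submodule ℂ X) (A : X →ₗ[ℂ] X)
    (hres : ∃ μ : ℂ, ∃ R : X →L[ℂ] X, (∀ x : X, R x ∈ D) ∧
      (∀ x : X, μ • R x - A (R x) = x) ∧ (∀ x ∈ D, R (μ • x - A x) = x))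
    {t : ℝ} (ht : 0 ≤ t) (f h : ℝ → X) (hf : ContinuousOn f (Set.Icc 0 t))
    (hh : ContinuousOn h (Set.Icc 0 t)) (hfD : ∀ r ∈ Set.Icc 0 t, f r ∈ D)
    (hA : ∀ r ∈ Set.Icc 0 t, A (f r) = h r) :
    (∫ r in (0:ℝ)..t, f r) ∈ D ∧ A (∫ r in (0:ℝ)..t, f r) = ∫ r in (0:ℝ)..t, h r := by
  obtain ⟨μ, R, hR1, hR2, hR3⟩ := hres
  have If : IntervalIntegrable f volume 0 t :=
    ContinuousOn.intervalIntegrable (by rwa [Set.uIcc_of_le ht])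
  have Ih : IntervalIntegrable h volume 0 t :=
    ContinuousOn.intervalIntegrable (by rwa [Set.uIcc_of_le ht])
  have If' : IntervalIntegrable (fun r => μ • f r) volume 0 t := If.smul μ
  have key : ∫ r in (0:ℝ)..t, f r =
      R (μ • (∫ r in (0:ℝ)..t, f r) - ∫ r in (0:ℝ)..t, h r) := by
    rw [← intervalIntegral.integral_smul, ← intervalIntegral.integral_sub If' Ih,
      ← ContinuousLinearMap.intervalIntegral_comp_comm R (If'.sub Ih)]
    refine intervalIntegral.integral_congr fun r hr => ?_
    rw [Set.uIcc_of_le ht] at hr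
    rw [← hA r hr, hR3 _ (hfD r hr)]
  refine ⟨key ▸ hR1 _, ?_⟩
  have h2 := hR2 (μ • (∫ r in (0:ℝ)..t, f r) - ∫ r in (0:ℝ)..t, h r)
  rw [← key] at h2
  exact sub_right_injective h2

lemma Dop_integrand_cont (S : ℝ → X →L[ℂ] X)
    (hcont : ∀ x : X, ContinuousOn (fun u : ℝ => S u x) (Set.Ici (0:ℝ)))
    (l : ℂ) (t : ℝ) (x : X) :
    ContinuousOn (fun r => Complex.exp (l * ((t - r : ℝ) : ℂ)) • S r x) (Set.Icc 0 t) :=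
  (Continuous.continuousOn (by fun_prop)).smul ((hcont x).mono Set.Icc_subset_Ici_self)

lemma Dop_sub (S : ℝ → X →L[ℂ] X)
    (hcont : ∀ x : X, ContinuousOn (fun u : ℝ => S u x) (Set.Ici (0:ℝ)))
    (l : ℂ) {t : ℝ} (ht : 0 ≤ t) (x y : X) :
    Dop S l t (x - y) = Dop S l t x - Dop S l t y := by
  have I : ∀ x : X, IntervalIntegrable
      (fun r => Complex.exp (l * ((t - r : ℝ) : ℂ)) • S r x) volume 0 t := fun x =>
    ContinuousOn.intervalIntegrable (by
      rw [Set.uIcc_of_le ht]; exact Dop_integrand_cont S hcont l t x)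
  unfold Dop
  rw [← intervalIntegral.integral_sub (I x) (I y)]
  simp only [map_sub, smul_sub]

lemma Dop_smul (S : ℝ → X →L[ℂ] X) (l : ℂ) (t : ℝ) (k : ℂ) (x : X) :
    Dop S l t (k • x) = k • Dop S l t x := by
  unfold Dop
  rw [← intervalIntegral.integral_smul]
  simp only [map_smul]
  congr 1
  ext r
  rw [smul_comm]

/-- `D_λ(t)` commutes with `λ - A` on the domain of `A`. -/
lemma Dop_comm [CompleteSpace X] (D : Submodule ℂ X) (A : X →ₗ[ℂ] X)
    (S : ℝ → X →L[ℂ] X)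
    (hcont : ∀ x : X, ContinuousOn (fun u : ℝ => S u x) (Set.Ici (0:ℝ)))
    (hres : ∃ μ : ℂ, ∃ R : X →L[ℂ] X, (∀ x : X, R x ∈ D) ∧
      (∀ x : X, μ • R x - A (R x) = x) ∧ (∀ x ∈ D, R (μ • x - A x) = x))
    (hdom : ∀ u : ℝ, 0 ≤ u → ∀ x ∈ D, S u x ∈ D ∧ A (S u x) = S u (A x))
    (l : ℂ) {t : ℝ} (ht : 0 ≤ t) (x : X) (hx : x ∈ D) :
    l • Dop S l t x - A (Dop S l t x) = Dop S l t (l • x - A x) := by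
  have h := (closed_integral D A hres ht _ _ (Dop_integrand_cont S hcont l t x)
    (Dop_integrand_cont S hcont l t (A x))
    (fun r hr => D.smul_mem _ (hdom r hr.1 x hx).1)
    (fun r hr => by rw [map_smul, (hdom r hr.1 x hx).2])).2
  rw [Dop_sub S hcont l ht, Dop_smul]
  unfold Dop at *
  rw [h]

/-- `D_λ(t)` maps into the domain of `A`, and `(λ - A) D_λ(t) = c_λ(t) - S(t)`. -/
lemma Dop_resolvent [CompleteSpace X] {α : ℝ} (hα : 0 < α) (D : Submodule ℂ X) (A : X →ₗ[ℂ] X)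
    (S : ℝ → X →L[ℂ] X)
    (hcont : ∀ x : X, ContinuousOn (fun u : ℝ => S u x) (Set.Ici (0:ℝ)))
    (hres : ∃ μ : ℂ, ∃ R : X →L[ℂ] X, (∀ x : X, R x ∈ D) ∧
      (∀ x : X, μ • R x - A (R x) = x) ∧ (∀ x ∈ D, R (μ • x - A x) = x))
    (hint : ∀ u : ℝ, 0 ≤ u → ∀ x : X, (∫ s in (0:ℝ)..u, S s x) ∈ D ∧
      A (∫ s in (0:ℝ)..u, S s x) =
        S u x - (((u ^ α : ℝ) : ℂ) / ((Real.Gamma (α + 1) : ℝ) : ℂ)) • x)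
    (l : ℂ) {t : ℝ} (ht : 0 ≤ t) (x : X) :
    Dop S l t x ∈ D ∧ l • Dop S l t x - A (Dop S l t x) = cConst α l t • x - S t x := by
  have hS : ContinuousOn (fun u : ℝ => S u x) (Set.Icc 0 t) :=
    (hcont x).mono Set.Icc_subset_Ici_self
  have IS : IntervalIntegrable (fun u : ℝ => S u x) volume 0 t :=
    ContinuousOn.intervalIntegrable (by rwa [Set.uIcc_of_le ht])
  have hw : ContinuousOn (fun u : ℝ => ∫ s in (0:ℝ)..u, S s x) (Set.Icc 0 t) := by
    have := intervalIntegral.continuousOn_primitive_interval (a := 0) (b := t)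
      (f := fun u => S u x) (μ := volume)
      (by rw [Set.uIcc_of_le ht]; exact hS.integrableOn_Icc)
    rwa [Set.uIcc_of_le ht] at this
  have hibp : Dop S l t x = _ :=
    exp_ibp l ht (fun u : ℝ => ∫ s in (0:ℝ)..u, S s x) (fun u => S u x) hw
    (fun r hr => by
      have hsub : Set.uIcc 0 r ⊆ Set.uIcc 0 t := by
        rw [Set.uIcc_of_le ht, Set.uIcc_of_le hr.1.le]
        exact Set.Icc_subset_Icc_right hr.2.le
      refine intervalIntegral.integral_hasDerivAt_right (IS.mono_set hsub) ?_ ?_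
      · exact ((hS.mono Set.Ioo_subset_Icc_self).stronglyMeasurableAtFilter isOpen_Ioo) r hr
      · exact hS.continuousAt (Icc_mem_nhds hr.1 hr.2))
    IS (by simp)
  have hec : Continuous fun r : ℝ => Complex.exp (l * ((t - r : ℝ) : ℂ)) := by fun_prop
  have hg : Continuous fun r : ℝ => ((r ^ α : ℝ) : ℂ) / ((Real.Gamma (α + 1) : ℝ) : ℂ) :=
    (Complex.continuous_ofReal.comp (Real.continuous_rpow_const hα.le)).div_const _
  have hcl := closed_integral D A hres ht
    (fun r => Complex.exp (l * ((t - r : ℝ) : ℂ)) • ∫ s in (0:ℝ)..r, S s x)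
    (fun r => Complex.exp (l * ((t - r : ℝ) : ℂ)) • S r x -
      (Complex.exp (l * ((t - r : ℝ) : ℂ)) *
        (((r ^ α : ℝ) : ℂ) / ((Real.Gamma (α + 1) : ℝ) : ℂ))) • x)
    (hec.continuousOn.smul hw)
    ((Dop_integrand_cont S hcont l t x).sub
      ((hec.mul hg).smul continuous_const).continuousOn)
    (fun r hr => D.smul_mem _ (hint r hr.1 x).1)
    (fun r hr => by rw [map_smul, (hint r hr.1 x).2, smul_sub, mul_smul])
  have I1 : IntervalIntegrable
      (fun r => Complex.exp (l * ((t - r : ℝ) : ℂ)) • S r x) volume 0 t :=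
    ContinuousOn.intervalIntegrable (by
      rw [Set.uIcc_of_le ht]; exact Dop_integrand_cont S hcont l t x)
  have I2 : IntervalIntegrable
      (fun r : ℝ => (Complex.exp (l * ((t - r : ℝ) : ℂ)) *
        (((r ^ α : ℝ) : ℂ) / ((Real.Gamma (α + 1) : ℝ) : ℂ))) • x) volume 0 t :=
    ((hec.mul hg).smul continuous_const).intervalIntegrable _ _
  rw [intervalIntegral.integral_sub I1 I2, intervalIntegral.integral_smul_const] at hcl
  change _ ∧ _ = Dop S l t x - _ at hcl
  have hA := congrArg A hibp
  rw [map_add, map_smul, hcl.2, (hint t ht x).2] at hA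
  refine ⟨?_, ?_⟩
  · rw [hibp]
    exact D.add_mem (hint t ht x).1 (D.smul_mem _ hcl.1)
  · rw [hA, cConst_eq hα l ht, add_smul, mul_smul, smul_sub]
    abel

/-- If `S(r) x = c_λ(r) x` for all `r ≥ 0`, as holds for `x` in the kernel of `λ - A`, then
`D_λ(t) x = e^{λt} φ_λ(t) x`. -/
lemma Dop_kernel [CompleteSpace X] {α : ℝ} (S : ℝ → X →L[ℂ] X) (l : ℂ) {t : ℝ} (ht : 0 ≤ t) (x : X)
    (hx : ∀ r, 0 ≤ r → S r x = cConst α l r • x) :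
    Dop S l t x = (Complex.exp (l * (t : ℂ)) * phiConst α l t) • x := by
  rw [phiConst, ← intervalIntegral.integral_const_mul, ← intervalIntegral.integral_smul_const]
  unfold Dop
  refine intervalIntegral.integral_congr fun r hr => ?_
  rw [Set.uIcc_of_le ht] at hr
  rw [hx r hr.1, cConst_eq_exp_mul, smul_smul, ← mul_assoc, ← Complex.exp_add]
  congr 4
  push_cast; ring

end Operator

/-! ### Powers of `λ - A` and of `c_λ(t) - S(t)` -/

section Iterates

variable {X : Type*} {D : Set X} {f d B : X → X}

lemma iterate_B_comm (hfd : ∀ y, f (d y) = B y) (hdD : ∀ y, d y ∈ D)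
    (hc : ∀ y ∈ D, f (d y) = d (f y)) : Function.Commute B d := fun y => by
  rw [← hfd (d y), hc _ (hdD y), hfd]

/-- `B^m = T^m d^m`, so that `R(B^m) ⊆ R(T^m)`. -/
lemma iterate_range (hfd : ∀ y, f (d y) = B y) (hdD : ∀ y, d y ∈ D)
    (hc : ∀ y ∈ D, f (d y) = d (f y)) (m : ℕ) (z : X) :
    d^[m] z ∈ iterDom D f m ∧ f^[m] (d^[m] z) = B^[m] z := by
  induction m generalizing z with
  | zero => exact ⟨trivial, rfl⟩
  | succ m ih =>
    have h1 : f (d^[m + 1] z) = d^[m] (B z) := by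
      rw [Function.iterate_succ_apply', hfd]
      exact (iterate_B_comm hfd hdD hc).iterate_right m z
    refine ⟨⟨?_, ?_⟩, ?_⟩
    · rw [Function.iterate_succ_apply']; exact hdD _
    · rw [h1]; exact (ih _).1
    · rw [Function.iterate_succ_apply, h1, (ih _).2, Function.iterate_succ_apply]

/-- `B^n = d^n T^n` on the domain of `T^n`. -/
lemma iterate_dom (hfd : ∀ y, f (d y) = B y) (hdD : ∀ y, d y ∈ D)
    (hc : ∀ y ∈ D, f (d y) = d (f y)) (n : ℕ) (y : X) (hy : y ∈ iterDom D f n) :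
    B^[n] y = d^[n] (f^[n] y) := by
  induction n generalizing y with
  | zero => rfl
  | succ n ih =>
    rw [Function.iterate_succ_apply, ← hfd, hc y hy.1,
      (iterate_B_comm hfd hdD hc).iterate_left n, ih _ hy.2,
      Function.iterate_succ_apply f, Function.iterate_succ_apply' d]

lemma iterate_image_mono (k n : ℕ) :
    f^[k + n] '' iterDom D f (k + n) ⊆ f^[n] '' iterDom D f n := by
  induction k with
  | zero => simp
  | succ k ih =>
    rintro _ ⟨y, hy, rfl⟩
    rw [Nat.succ_add] at hy ⊢
    exact ih ⟨f y, hy.2, rfl⟩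

end Iterates

theorem stmt_14
    {X : Type*} [NormedAddCommGroup X] [NormedSpace ℂ X] [CompleteSpace X]
    (α : ℝ) (hα : 0 < α)
    (D : Submodule ℂ X) (A : X →ₗ[ℂ] X)
    (S : ℝ → X →L[ℂ] X)
    (hcont : ∀ x : X, ContinuousOn (fun u : ℝ => S u x) (Set.Ici (0:ℝ)))
    (hcomm : ∀ u v : ℝ, 0 ≤ u → 0 ≤ v → ∀ x : X, S u (S v x) = S v (S u x))
    (hres : ∃ μ : ℂ, ∃ R : X →L[ℂ] X, (∀ x : X, R x ∈ D) ∧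
      (∀ x : X, μ • R x - A (R x) = x) ∧ (∀ x ∈ D, R (μ • x - A x) = x))
    (hdom : ∀ u : ℝ, 0 ≤ u → ∀ x ∈ D, S u x ∈ D ∧ A (S u x) = S u (A x) ∧
      S u x = (((u ^ α : ℝ) : ℂ) / ((Real.Gamma (α + 1) : ℝ) : ℂ)) • x +
        ∫ s in (0:ℝ)..u, S s (A x))
    (hint : ∀ u : ℝ, 0 ≤ u → ∀ x : X, (∫ s in (0:ℝ)..u, S s x) ∈ D ∧
      A (∫ s in (0:ℝ)..u, S s x) =
        S u x - (((u ^ α : ℝ) : ℂ) / ((Real.Gamma (α + 1) : ℝ) : ℂ)) • x)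
    (l : ℂ) (t : ℝ)
    (ht : 0 < t) (hphi : phiConst α l t ≠ 0) (n : ℕ)
    (hdis : ∀ m : ℕ, n ≤ m →
      Set.range ⇑(cSop S α l t ^ m) ∩ {x : X | cSop S α l t x = 0} =
        Set.range ⇑(cSop S α l t ^ n) ∩ {x : X | cSop S α l t x = 0}) :
    ∀ m : ℕ, n ≤ m →
      ((fun y => l • y - A y)^[m] '' iterDom (D : Set X) (fun y => l • y - A y) m) ∩
          {x : X | x ∈ D ∧ l • x - A x = 0} =
        ((fun y => l • y - A y)^[n] '' iterDom (D : Set X) (fun y => l • y - A y) n) ∩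
          {x : X | x ∈ D ∧ l • x - A x = 0} := by
  have hdD : ∀ y, Dop S l t y ∈ (D : Set X) := fun y =>
    (Dop_resolvent hα D A S hcont hres hint l ht.le y).1
  have hfd : ∀ y, (fun y => l • y - A y) (Dop S l t y) = cSop S α l t y := fun y => by
    simpa [cSop] using (Dop_resolvent hα D A S hcont hres hint l ht.le y).2
  have hcm : ∀ u : ℝ, 0 ≤ u → ∀ x ∈ D, l • Dop S l u x - A (Dop S l u x) =
      Dop S l u (l • x - A x) := fun u hu x hx =>
    Dop_comm D A S hcont hres
      (fun u hu x hx => ⟨(hdom u hu x hx).1, (hdom u hu x hx).2.1⟩) l hu x hx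
  have hc : ∀ y ∈ (D : Set X), (fun y => l • y - A y) (Dop S l t y) =
      Dop S l t ((fun y => l • y - A y) y) := hcm t ht.le
  intro m hm
  apply Set.Subset.antisymm
  · obtain ⟨k, rfl⟩ := Nat.exists_eq_add_of_le' hm
    exact Set.inter_subset_inter_left _ (iterate_image_mono k n)
  rintro x ⟨⟨y, hy, hyx⟩, hxD, hx0⟩
  refine ⟨?_, hxD, hx0⟩
  have hDop0 : ∀ u, Dop S l u 0 = 0 := fun u => by simp [Dop]
  have hSr : ∀ r, 0 ≤ r → S r x = cConst α l r • x := fun r hr => by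
    have h1 := (Dop_resolvent hα D A S hcont hres hint l hr x).2
    rw [hcm r hr x hxD, hx0, hDop0] at h1
    exact (sub_eq_zero.mp h1.symm).symm
  have hker := Dop_kernel S l ht.le x hSr
  set k : ℂ := Complex.exp (l * (t : ℂ)) * phiConst α l t with hk
  have hk0 : k ≠ 0 := mul_ne_zero (Complex.exp_ne_zero _) hphi
  have hit : ∀ j : ℕ, (Dop S l t)^[j] x = k ^ j • x := fun j => by
    induction j with
    | zero => simp
    | succ j ih => rw [Function.iterate_succ_apply', ih, Dop_smul, hker, smul_smul, pow_succ]
  have hpow : ∀ (j : ℕ) (z : X), (cSop S α l t ^ j) z = (cSop S α l t)^[j] z := fun j => by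
    induction j with
    | zero => intro z; rfl
    | succ j ih => intro z; rw [pow_succ, Function.iterate_succ_apply, ← ih]; rfl
  have hBn : (cSop S α l t ^ n) y = k ^ n • x := by
    rw [hpow, iterate_dom hfd hdD hc n y hy, hyx, hit]
  have hmem : x ∈ Set.range ⇑(cSop S α l t ^ n) ∩ {x : X | cSop S α l t x = 0} := by
    refine ⟨⟨(k ^ n)⁻¹ • y, ?_⟩, ?_⟩
    · rw [map_smul, hBn, inv_smul_smul₀ (pow_ne_zero n hk0)]
    · simp [cSop, hSr t ht.le]
  rw [← hdis m hm] at hmem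
  obtain ⟨⟨z, hz⟩, -⟩ := hmem
  obtain ⟨h1, h2⟩ := iterate_range (f := fun y => l • y - A y) hfd hdD hc m z
  exact ⟨_, h1, by rw [h2, ← hz, hpow]⟩
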